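/- arXiv:math-ph/0308010 — 2 statements merged into one kernel-verified Lean document; each statement's English description precedes it below -/
import Mathlib

section
/- The satellite system is Hamiltonian with respect to the bracket {·,·}: for the Hamiltonian H(M,N,S) = (1/2)⟨M, I⁻¹M⟩ − ω_O⟨M,N⟩ + (3/2)ω_K²⟨S, IS⟩ − (ξ/2)⟨L,N⟩², one has at every point (M,N,S) ∈ ℝ⁹ and for each i = 1,2,3: {Mᵢ, H} equals the i-th component of M×Ω + 3ω_K² S×(IS) + ξ⟨L,N⟩ L×N, {Nᵢ, H} equals the i-th component of N×Ω, and {Sᵢ, H} equals the i-th component of S×(Ω − ω_O N), where Ω = I⁻¹M. -/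
noncomputable section

/-- Cross product on ℝ³. -/
def cross3 (a b : Fin 3 → ℝ) : Fin 3 → ℝ :=
  ![a 1 * b 2 - a 2 * b 1, a 2 * b 0 - a 0 * b 2, a 0 * b 1 - a 1 * b 0]

/-- Euclidean inner product on ℝ³. -/
def dot3 (a b : Fin 3 → ℝ) : ℝ := a 0 * b 0 + a 1 * b 1 + a 2 * b 2

/-- `I v` where `I = diag(A,B,C)`. -/
def inertia (A B C : ℝ) (v : Fin 3 → ℝ) : Fin 3 → ℝ := ![A * v 0, B * v 1, C * v 2]

/-- `I⁻¹ v` where `I = diag(A,B,C)`. -/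
def inertiaInv (A B C : ℝ) (v : Fin 3 → ℝ) : Fin 3 → ℝ := ![v 0 / A, v 1 / B, v 2 / C]

/-- Right-hand side for `M' = M×Ω + 3ω_K² S×(IS) + ξ⟨L,N⟩ L×N`, with `Ω = I⁻¹M`. -/
def rhsM (A B C ωK ξ : ℝ) (L M N S : Fin 3 → ℝ) : Fin 3 → ℝ :=
  cross3 M (inertiaInv A B C M) + (3 * ωK ^ 2) • cross3 S (inertia A B C S)
    + (ξ * dot3 L N) • cross3 L N

/-- Right-hand side for `N' = N×Ω`. -/
def rhsN (A B C : ℝ) (M N : Fin 3 → ℝ) : Fin 3 → ℝ :=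
  cross3 N (inertiaInv A B C M)

/-- Right-hand side for `S' = S×(Ω − ω_O N)`. -/
def rhsS (A B C ωO : ℝ) (M N S : Fin 3 → ℝ) : Fin 3 → ℝ :=
  cross3 S (inertiaInv A B C M - ωO • N)

/-- Gradient with respect to the block `M` of a function `F(M,N,S)`. -/
def gradM (F : (Fin 3 → ℝ) → (Fin 3 → ℝ) → (Fin 3 → ℝ) → ℝ)
    (M N S : Fin 3 → ℝ) : Fin 3 → ℝ :=
  fun i => deriv (fun x : ℝ => F (Function.update M i x) N S) (M i)

/-- Gradient with respect to the block `N` of a function `F(M,N,S)`. -/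
def gradN (F : (Fin 3 → ℝ) → (Fin 3 → ℝ) → (Fin 3 → ℝ) → ℝ)
    (M N S : Fin 3 → ℝ) : Fin 3 → ℝ :=
  fun i => deriv (fun x : ℝ => F M (Function.update N i x) S) (N i)

/-- Gradient with respect to the block `S` of a function `F(M,N,S)`. -/
def gradS (F : (Fin 3 → ℝ) → (Fin 3 → ℝ) → (Fin 3 → ℝ) → ℝ)
    (M N S : Fin 3 → ℝ) : Fin 3 → ℝ :=
  fun i => deriv (fun x : ℝ => F M N (Function.update S i x)) (S i)

/-- The Poisson bracket
`{F,G} = −⟨M, ∇_M F×∇_M G⟩ − ⟨N, ∇_M F×∇_N G − ∇_M G×∇_N F⟩ − ⟨S, ∇_M F×∇_S G − ∇_M G×∇_S F⟩`. -/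
def pbracket (F G : (Fin 3 → ℝ) → (Fin 3 → ℝ) → (Fin 3 → ℝ) → ℝ)
    (M N S : Fin 3 → ℝ) : ℝ :=
  - dot3 M (cross3 (gradM F M N S) (gradM G M N S))
  - dot3 N (cross3 (gradM F M N S) (gradN G M N S) - cross3 (gradM G M N S) (gradN F M N S))
  - dot3 S (cross3 (gradM F M N S) (gradS G M N S) - cross3 (gradM G M N S) (gradS F M N S))

/-- The energy-type Hamiltonian
`H = (1/2)⟨M,I⁻¹M⟩ − ω_O⟨M,N⟩ + (3/2)ω_K²⟨S,IS⟩ − (ξ/2)⟨L,N⟩²`. -/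
def energyH (A B C ωO ωK ξ : ℝ) (L M N S : Fin 3 → ℝ) : ℝ :=
  (1 / 2) * dot3 M (inertiaInv A B C M) - ωO * dot3 M N
    + (3 / 2) * ωK ^ 2 * dot3 S (inertia A B C S) - (ξ / 2) * (dot3 L N) ^ 2

/-!
Cyclicity of the triple product moves all gradients of `F` out of the cross products:
`{F,G} = ⟨∇_M F, M×∇_M G + N×∇_N G + S×∇_S G⟩ + ⟨∇_N F, N×∇_M G⟩ + ⟨∇_S F, S×∇_M G⟩`,
and `F` a coordinate function picks out one component. For the energy, `∇_M H = Ω − ω_O N`,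
`∇_N H = −ω_O M − ξ⟨L,N⟩L` and `∇_S H = 3ω_K² IS`; the `ω_O`-terms cancel in `M'` because
`M×N + N×M = 0`, and in `N'` because `N×N = 0`.
-/

section Gradients

open Matrix

variable {𝕜 ι : Type*} [NontriviallyNormedField 𝕜]

theorem hasDerivAt_dotProduct [Fintype ι] {u w : 𝕜 → ι → 𝕜} {u' w' : ι → 𝕜} {x : 𝕜}
    (hu : HasDerivAt u u' x) (hw : HasDerivAt w w' x) :
    HasDerivAt (fun y => u y ⬝ᵥ w y) (u' ⬝ᵥ w x + u x ⬝ᵥ w') x := by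
  simp only [dotProduct, ← Finset.sum_add_distrib]
  exact HasDerivAt.fun_sum fun i _ => (hasDerivAt_pi.1 hu i).fun_mul (hasDerivAt_pi.1 hw i)

theorem hasDerivAt_const_dotProduct [Fintype ι] (c : ι → 𝕜) {w : 𝕜 → ι → 𝕜} {w' : ι → 𝕜} {x : 𝕜}
    (hw : HasDerivAt w w' x) : HasDerivAt (fun y => c ⬝ᵥ w y) (c ⬝ᵥ w') x := by
  simpa only [zero_dotProduct, zero_add] using hasDerivAt_dotProduct (hasDerivAt_const x c) hw

theorem hasDerivAt_mulVec {κ : Type*} [Fintype ι] [Finite κ] (Q : Matrix κ ι 𝕜)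
    {w : 𝕜 → ι → 𝕜} {w' : ι → 𝕜} {x : 𝕜} (hw : HasDerivAt w w' x) :
    HasDerivAt (fun y => Q *ᵥ w y) (Q *ᵥ w') x :=
  have := Fintype.ofFinite κ
  hasDerivAt_pi.2 fun k => hasDerivAt_const_dotProduct (Q k) hw

variable [DecidableEq ι]

theorem deriv_update_apply (v : ι → 𝕜) (i j : ι) (x : 𝕜) :
    deriv (fun y => Function.update v j y i) x = (Pi.single i 1 : ι → 𝕜) j := by
  rcases eq_or_ne i j with rfl | h
  · simp
  · simp [h, h.symm]

variable [Fintype ι]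

theorem hasDerivAt_dotProduct_update (w v : ι → 𝕜) (i : ι) (x : 𝕜) :
    HasDerivAt (fun y => w ⬝ᵥ Function.update v i y) (w i) x := by
  simpa only [dotProduct_single_one] using
    hasDerivAt_const_dotProduct w (hasDerivAt_update v i x)

theorem hasDerivAt_quadraticForm_update {Q : Matrix ι ι 𝕜} (hQ : Q.IsSymm) (v : ι → 𝕜) (i : ι) :
    HasDerivAt (fun y => Function.update v i y ⬝ᵥ Q *ᵥ Function.update v i y)
      (2 * (Q *ᵥ v) i) (v i) := by
  have hv := hasDerivAt_update v i (v i)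
  have hsymm : v ⬝ᵥ Q *ᵥ Pi.single i 1 = (Q *ᵥ v) i := by
    rw [dotProduct_mulVec, ← mulVec_transpose, hQ.eq, dotProduct_single_one]
  simpa only [Function.update_eq_self, single_one_dotProduct, hsymm, ← two_mul] using
    hasDerivAt_dotProduct hv (hasDerivAt_mulVec Q hv)

end Gradients

section Bracket

open Matrix

theorem cross3_eq_crossProduct (a b : Fin 3 → ℝ) : cross3 a b = a ⨯₃ b :=
  (cross_apply a b).symm

theorem dot3_eq_dotProduct (a b : Fin 3 → ℝ) : dot3 a b = a ⬝ᵥ b :=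
  (vec3_dotProduct a b).symm

variable (F G : (Fin 3 → ℝ) → (Fin 3 → ℝ) → (Fin 3 → ℝ) → ℝ) (M N S : Fin 3 → ℝ) (i : Fin 3)

theorem pbracket_eq_dotProduct_grad :
    pbracket F G M N S =
      gradM F M N S ⬝ᵥ (M ⨯₃ gradM G M N S + N ⨯₃ gradN G M N S + S ⨯₃ gradS G M N S)
        + gradN F M N S ⬝ᵥ N ⨯₃ gradM G M N S + gradS F M N S ⬝ᵥ S ⨯₃ gradM G M N S := by
  have triple_rotate (u v w : Fin 3 → ℝ) : u ⬝ᵥ v ⨯₃ w = w ⬝ᵥ u ⨯₃ v := by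
    rw [triple_product_permutation, triple_product_permutation]
  have neg_triple_swap (u v w : Fin 3 → ℝ) : -(u ⬝ᵥ v ⨯₃ w) = v ⬝ᵥ u ⨯₃ w := by
    rw [triple_product_permutation, ← cross_anticomm, dotProduct_neg, neg_neg]
  simp only [pbracket, dot3_eq_dotProduct, cross3_eq_crossProduct, dotProduct_sub, dotProduct_add]
  linear_combination neg_triple_swap M (gradM F M N S) (gradM G M N S)
    + neg_triple_swap N (gradM F M N S) (gradN G M N S)
    + neg_triple_swap S (gradM F M N S) (gradS G M N S)
    + triple_rotate N (gradM G M N S) (gradN F M N S)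
    + triple_rotate S (gradM G M N S) (gradS F M N S)

theorem pbracket_coordM :
    pbracket (fun M _ _ => M i) G M N S =
      (M ⨯₃ gradM G M N S + N ⨯₃ gradN G M N S + S ⨯₃ gradS G M N S) i := by
  have hM : gradM (fun M _ _ => M i) M N S = Pi.single i 1 :=
    funext fun j => deriv_update_apply M i j (M j)
  have hN : gradN (fun M _ _ => M i) M N S = 0 := funext fun j => deriv_const (N j) (M i)
  have hS : gradS (fun M _ _ => M i) M N S = 0 := funext fun j => deriv_const (S j) (M i)
  rw [pbracket_eq_dotProduct_grad, hM, hN, hS, single_one_dotProduct, zero_dotProduct,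
    zero_dotProduct, add_zero, add_zero]

theorem pbracket_coordN :
    pbracket (fun _ N _ => N i) G M N S = (N ⨯₃ gradM G M N S) i := by
  have hM : gradM (fun _ N _ => N i) M N S = 0 := funext fun j => deriv_const (M j) (N i)
  have hN : gradN (fun _ N _ => N i) M N S = Pi.single i 1 :=
    funext fun j => deriv_update_apply N i j (N j)
  have hS : gradS (fun _ N _ => N i) M N S = 0 := funext fun j => deriv_const (S j) (N i)
  rw [pbracket_eq_dotProduct_grad, hM, hN, hS, single_one_dotProduct, zero_dotProduct,
    zero_dotProduct, zero_add, add_zero]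

theorem pbracket_coordS :
    pbracket (fun _ _ S => S i) G M N S = (S ⨯₃ gradM G M N S) i := by
  have hM : gradM (fun _ _ S => S i) M N S = 0 := funext fun j => deriv_const (M j) (S i)
  have hN : gradN (fun _ _ S => S i) M N S = 0 := funext fun j => deriv_const (N j) (S i)
  have hS : gradS (fun _ _ S => S i) M N S = Pi.single i 1 :=
    funext fun j => deriv_update_apply S i j (S j)
  rw [pbracket_eq_dotProduct_grad, hM, hN, hS, single_one_dotProduct, zero_dotProduct,
    zero_dotProduct, zero_add, zero_add]

end Bracket

section Energy

open Matrix

variable (A B C ωO ωK ξ : ℝ) (L M N S : Fin 3 → ℝ)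

theorem inertia_eq_diagonal_mulVec (v : Fin 3 → ℝ) :
    inertia A B C v = diagonal ![A, B, C] *ᵥ v := by
  ext i
  fin_cases i <;> simp [inertia, mulVec_diagonal]

theorem inertiaInv_eq_diagonal_mulVec (v : Fin 3 → ℝ) :
    inertiaInv A B C v = diagonal ![A⁻¹, B⁻¹, C⁻¹] *ᵥ v := by
  ext i
  fin_cases i <;> simp [inertiaInv, mulVec_diagonal, div_eq_inv_mul]

theorem energyH_eq_quadraticForm :
    energyH A B C ωO ωK ξ L M N S =
      1 / 2 * (M ⬝ᵥ diagonal ![A⁻¹, B⁻¹, C⁻¹] *ᵥ M) - ωO * (M ⬝ᵥ N)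
        + 3 / 2 * ωK ^ 2 * (S ⬝ᵥ diagonal ![A, B, C] *ᵥ S) - ξ / 2 * (L ⬝ᵥ N) ^ 2 := by
  simp only [energyH, dot3_eq_dotProduct, inertia_eq_diagonal_mulVec,
    inertiaInv_eq_diagonal_mulVec]

theorem gradM_energyH :
    gradM (energyH A B C ωO ωK ξ L) M N S = inertiaInv A B C M - ωO • N := by
  ext i
  have hkin := hasDerivAt_quadraticForm_update (isSymm_diagonal ![A⁻¹, B⁻¹, C⁻¹]) M i
  have hlin := hasDerivAt_dotProduct_update N M i (M i)
  simp only [gradM, energyH_eq_quadraticForm, dotProduct_comm _ N]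
  rw [((((hkin.const_mul (1 / 2)).fun_sub (hlin.const_mul ωO)).add_const _).sub_const _).deriv,
    inertiaInv_eq_diagonal_mulVec, Pi.sub_apply, Pi.smul_apply, smul_eq_mul]
  ring

theorem gradN_energyH :
    gradN (energyH A B C ωO ωK ξ L) M N S = -(ωO • M) - (ξ * dot3 L N) • L := by
  ext i
  have hlin := hasDerivAt_dotProduct_update M N i (N i)
  have hsq := (hasDerivAt_dotProduct_update L N i (N i)).fun_pow 2
  simp only [gradN, energyH_eq_quadraticForm]
  rw [((((hlin.const_mul ωO).const_sub _).add_const _).fun_sub (hsq.const_mul (ξ / 2))).deriv,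
    Function.update_eq_self, dot3_eq_dotProduct]
  simp only [Pi.sub_apply, Pi.neg_apply, Pi.smul_apply, smul_eq_mul]
  ring

theorem gradS_energyH :
    gradS (energyH A B C ωO ωK ξ L) M N S = (3 * ωK ^ 2) • inertia A B C S := by
  ext i
  have hgrav := hasDerivAt_quadraticForm_update (isSymm_diagonal ![A, B, C]) S i
  simp only [gradS, energyH_eq_quadraticForm]
  rw [(((hgrav.const_mul (3 / 2 * ωK ^ 2)).const_add _).sub_const _).deriv,
    inertia_eq_diagonal_mulVec, Pi.smul_apply, smul_eq_mul]
  ring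

theorem sum_cross_grad_energyH_eq_rhsM :
    M ⨯₃ gradM (energyH A B C ωO ωK ξ L) M N S + N ⨯₃ gradN (energyH A B C ωO ωK ξ L) M N S
      + S ⨯₃ gradS (energyH A B C ωO ωK ξ L) M N S = rhsM A B C ωK ξ L M N S := by
  simp only [gradM_energyH, gradN_energyH, gradS_energyH, rhsM, cross3_eq_crossProduct, map_sub,
    map_neg, map_smul, ← cross_anticomm M N, ← cross_anticomm L N, smul_neg]
  abel

theorem cross_gradM_energyH_eq_rhsN :
    N ⨯₃ gradM (energyH A B C ωO ωK ξ L) M N S = rhsN A B C M N := by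
  rw [gradM_energyH, rhsN, cross3_eq_crossProduct, map_sub, map_smul, cross_self, smul_zero,
    sub_zero]

theorem cross_gradM_energyH_eq_rhsS :
    S ⨯₃ gradM (energyH A B C ωO ωK ξ L) M N S = rhsS A B C ωO M N S := by
  rw [gradM_energyH, rhsS, cross3_eq_crossProduct]

end Energy

/-- the satellite system is Hamiltonian with respect to the bracket:
`{Mᵢ,H}`, `{Nᵢ,H}`, `{Sᵢ,H}` are the components of the satellite vector field. -/
theorem satellite_is_hamiltonian (A B C ωO ωK ξ : ℝ)
    (hA : 0 < A) (hB : 0 < B) (hC : 0 < C) (L : Fin 3 → ℝ) :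
    ∀ (M N S : Fin 3 → ℝ) (i : Fin 3),
      pbracket (fun M _ _ => M i) (energyH A B C ωO ωK ξ L) M N S
        = rhsM A B C ωK ξ L M N S i ∧
      pbracket (fun _ N _ => N i) (energyH A B C ωO ωK ξ L) M N S
        = rhsN A B C M N i ∧
      pbracket (fun _ _ S => S i) (energyH A B C ωO ωK ξ L) M N S
        = rhsS A B C ωO M N S i := by
  intro M N S i
  refine ⟨?_, ?_, ?_⟩
  · rw [pbracket_coordM, sum_cross_grad_energyH_eq_rhsM]
  · rw [pbracket_coordN, cross_gradM_energyH_eq_rhsN]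
  · rw [pbracket_coordS, cross_gradM_energyH_eq_rhsS]
end
end

section
/- Let r be the case C > 1 normal-form coefficient with poles z₁ = k, z₂ = −k, z₃ = ik', z₄ = −ik'. There exist e_∞ ∈ {−1, 2}, e₁, e₂, e₃, e₄ ∈ {1/4, 3/4} with d := 1 − (e_∞ + e₁ + e₂ + e₃ + e₄) a non-negative integer, and a monic polynomial P ∈ ℂ[z] of degree d satisfying P'' + 2wP' + (w' + w² − r)P = 0 on ℂ ∖ {z₁,z₂,z₃,z₄}, where w(z) = Σᵢ₌₁⁴ eᵢ/(z−zᵢ), if and only if 2k² − 1 > 0, ξ = −1/(2k²−1) and ω² = 2/(2k²−1). -/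
noncomputable section

open Complex

/-- The complementary modulus `k' = √(1−k²)`. -/
def kp (k : ℝ) : ℝ := Real.sqrt (1 - k ^ 2)

/-- The coefficient `p(z) = z(−1 + 2(k²−z²)) / ((k²−z²)(z²+k'²))`. -/
def pcoef (k : ℝ) (z : ℂ) : ℂ :=
  z * (-1 + 2 * ((k : ℂ) ^ 2 - z ^ 2)) /
    (((k : ℂ) ^ 2 - z ^ 2) * (z ^ 2 + (kp k : ℂ) ^ 2))

/-- The coefficient `q(z)` in the case `C > 1`. -/
def qGt (k ω ξ : ℝ) (z : ℂ) : ℂ :=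
  (-(ξ : ℂ) + (1 + (ω : ℂ) * z) ^ 2 - (ω : ℂ) ^ 2 * ((k : ℂ) ^ 2 - z ^ 2)) /
    ((ω : ℂ) ^ 2 * ((k : ℂ) ^ 2 - z ^ 2) * (z ^ 2 + (kp k : ℂ) ^ 2))

/-- The normal-form coefficient `r = −q + p'/2 + p²/4` in the case `C > 1`. -/
def rGt (k ω ξ : ℝ) (z : ℂ) : ℂ :=
  -qGt k ω ξ z + deriv (pcoef k) z / 2 + pcoef k z ^ 2 / 4

/-- The poles `z₁ = k`, `z₂ = −k`, `z₃ = ik'`, `z₄ = −ik'`. -/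
def poles (k : ℝ) : Fin 4 → ℂ :=
  ![(k : ℂ), -(k : ℂ), I * (kp k : ℂ), -(I * (kp k : ℂ))]

/-!
The exponents `1/4` and `3/4` are the two roots of `e² − e = −3/16`, so `w' + w²` and `r` have the
same double poles whichever of them is chosen at each `zᵢ`. Moreover `p/2` is the sum
`∑ (1/4)/(z − zᵢ)`, so that `r = −q + v' + v²` with `v = p/2`, and hence
`w' + w² − r = q + ∑_{i ≠ j} (eᵢ eⱼ − 1/16) / ((z − zᵢ) (z − zⱼ))`.

The condition on `d` leaves two possibilities. If `d = 0` and `∑ eᵢ = 2`, then clearing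
denominators and comparing the coefficients of `z` gives `ω ∑ eᵢ zᵢ = 1`; the imaginary part forces
`e₃ = e₄`, then `e₁ + e₂ = 2 − 2e₃` forces `e₁ = e₂`, and the sum vanishes. If `d = 1` and all
`eᵢ = 1/4`, the equation is `P'' + pP' + qP = 0` for `P = z + c`, whose coefficients after clearing
denominators give `c = −1/ω` and the two relations between `k`, `ω` and `ξ`.
-/

section General

open Finset Polynomial

/-- The rational function `w(z) = Σᵢ eᵢ / (z − aᵢ)` with simple poles `aᵢ` and residues `eᵢ`. -/
def poleSum {𝕜 ι : Type*} [Field 𝕜] [Fintype ι] (e a : ι → 𝕜) (z : 𝕜) : 𝕜 :=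
  ∑ i, e i / (z - a i)

/-- The left-hand side `P'' + 2wP' + (w' + w² − r)P` of Kovacic's equation at `z`. Up to the
factor `exp ∫w`, this is `W'' − rW` for `W = P exp ∫w`. -/
def kovacicResidual {𝕜 : Type*} [NontriviallyNormedField 𝕜] (r w : 𝕜 → 𝕜) (P : 𝕜[X]) (z : 𝕜) :
    𝕜 :=
  (derivative (derivative P)).eval z + 2 * w z * (derivative P).eval z
    + (deriv w z + w z ^ 2 - r z) * P.eval z

section Riccati

variable {𝕜 ι : Type*} [NontriviallyNormedField 𝕜] [Fintype ι] {a : ι → 𝕜} {z : 𝕜}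

lemma hasDerivAt_poleSum (e : ι → 𝕜) (hz : ∀ i, z ≠ a i) :
    HasDerivAt (poleSum e a) (-∑ i, e i / (z - a i) ^ 2) z := by
  rw [← sum_neg_distrib]
  refine HasDerivAt.fun_sum fun i _ ↦ ?_
  simpa [neg_div] using (hasDerivAt_const z (e i)).fun_div ((hasDerivAt_id' z).sub_const (a i))
    (sub_ne_zero.2 (hz i))

lemma deriv_poleSum_add_sq (e : ι → 𝕜) (hz : ∀ i, z ≠ a i) :
    deriv (poleSum e a) z + poleSum e a z ^ 2 = ∑ i, (e i ^ 2 - e i) / (z - a i) ^ 2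
      + ∑ x ∈ univ.offDiag, e x.1 * e x.2 / ((z - a x.1) * (z - a x.2)) := by
  have square : poleSum e a z ^ 2 = ∑ i, e i ^ 2 / (z - a i) ^ 2
      + ∑ x ∈ univ.offDiag, e x.1 * e x.2 / ((z - a x.1) * (z - a x.2)) := by
    simp only [poleSum, sq, sum_mul_sum, ← sum_product', div_mul_div_comm]
    classical rw [← diag_union_offDiag, sum_union (disjoint_diag_offDiag _), sum_diag]
  rw [(hasDerivAt_poleSum e hz).deriv, square]
  simp only [sub_div, sum_sub_distrib]
  ring

lemma deriv_poleSum_add_sq_sub {e f : ι → 𝕜}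
    (hef : ∀ i, e i ^ 2 - e i = f i ^ 2 - f i) (hz : ∀ i, z ≠ a i) :
    (deriv (poleSum e a) z + poleSum e a z ^ 2) - (deriv (poleSum f a) z + poleSum f a z ^ 2) =
      ∑ x ∈ univ.offDiag, (e x.1 * e x.2 - f x.1 * f x.2) / ((z - a x.1) * (z - a x.2)) := by
  simp only [deriv_poleSum_add_sq _ hz, hef, sub_div _ (f _ * f _), sum_sub_distrib]
  ring

end Riccati

lemma exists_prod_mul_sum_offDiag_eq {K : Type*} [Field K] {e f a : Fin 4 → K}
    (hef : ∀ i, e i ^ 2 - e i = f i ^ 2 - f i) (ha : ∑ i, a i = 0) :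
    ∃ c, ∀ z, (∀ i, z ≠ a i) →
      (∏ i, (z - a i)) *
          ∑ x ∈ univ.offDiag, (e x.1 * e x.2 - f x.1 * f x.2) / ((z - a x.1) * (z - a x.2)) =
        ((∑ i, e i) * (∑ i, e i - 1) - (∑ i, f i) * (∑ i, f i - 1)) * z ^ 2
          + 2 * ((∑ i, e i - 1) * ∑ i, e i * a i - (∑ i, f i - 1) * ∑ i, f i * a i) * z + c := by
  let g i j := 2 * (e i * e j - f i * f j)
  refine ⟨g 0 1 * a 2 * a 3 + g 0 2 * a 1 * a 3 + g 0 3 * a 1 * a 2 + g 1 2 * a 0 * a 3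
    + g 1 3 * a 0 * a 2 + g 2 3 * a 0 * a 1, fun z hz ↦ ?_⟩
  have offDiag_eq : (univ : Finset (Fin 4)).offDiag = {(0, 1), (0, 2), (0, 3), (1, 0), (1, 2),
    (1, 3), (2, 0), (2, 1), (2, 3), (3, 0), (3, 1), (3, 2)} := by decide
  have h0 := sub_ne_zero.2 (hz 0)
  have h1 := sub_ne_zero.2 (hz 1)
  have h2 := sub_ne_zero.2 (hz 2)
  have h3 := sub_ne_zero.2 (hz 3)
  have cleared : (∏ i, (z - a i)) *
      ∑ x ∈ univ.offDiag, (e x.1 * e x.2 - f x.1 * f x.2) / ((z - a x.1) * (z - a x.2)) =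
      g 0 1 * (z - a 2) * (z - a 3) + g 0 2 * (z - a 1) * (z - a 3)
      + g 0 3 * (z - a 1) * (z - a 2) + g 1 2 * (z - a 0) * (z - a 3)
      + g 1 3 * (z - a 0) * (z - a 2) + g 2 3 * (z - a 0) * (z - a 1) := by
    rw [offDiag_eq]
    simp only [Fin.prod_univ_four, g, mem_insert, Prod.mk.injEq, Fin.reduceEq, and_false,
      zero_ne_one, one_ne_zero, and_self, and_true, mem_singleton, or_self, not_false_eq_true,
      sum_insert, sum_singleton]
    field_simp
    ring
  rw [cleared]
  simp only [Fin.sum_univ_four] at ha ⊢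
  linear_combination (-z * (g 0 1 + g 0 2 + g 0 3 + g 1 2 + g 1 3 + g 2 3)) * ha
    - (z ^ 2 + 2 * z * a 0) * hef 0 - (z ^ 2 + 2 * z * a 1) * hef 1
    - (z ^ 2 + 2 * z * a 2) * hef 2 - (z ^ 2 + 2 * z * a 3) * hef 3

lemma sq_sub_self_of_eq_quarter_or {K : Type*} [Field K] [CharZero K] {e : K}
    (he : e = 1 / 4 ∨ e = 3 / 4) : e ^ 2 - e = (1 / 4) ^ 2 - 1 / 4 := by
  rcases he with rfl | rfl <;> norm_num

lemma cubic_eq_zero_of_eval_eq_zero_off_finite {K : Type*} [CommRing K] [IsDomain K] [Infinite K]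
    {C : Cubic K} {s : Set K} (hs : s.Finite) (h : ∀ z ∉ s, C.toPoly.eval z = 0) : C = 0 := by
  rw [← Cubic.toPoly_eq_zero_iff]
  exact eq_zero_of_infinite_isRoot _ (hs.infinite_compl.mono h)

end General

section Poles

variable {k ω ξ : ℝ} {z : ℂ}

lemma kp_pos (hk : k ^ 2 < 1) : 0 < kp k :=
  Real.sqrt_pos.2 (sub_pos.2 hk)

lemma ofReal_kp_sq (hk : k ^ 2 ≤ 1) : (kp k : ℂ) ^ 2 = 1 - (k : ℂ) ^ 2 := by
  exact_mod_cast Real.sq_sqrt (sub_nonneg.2 hk)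

lemma prod_sub_poles (k : ℝ) (z : ℂ) :
    ∏ i, (z - poles k i) = -(((k : ℂ) ^ 2 - z ^ 2) * (z ^ 2 + (kp k : ℂ) ^ 2)) := by
  simp only [Fin.prod_univ_four, poles, Matrix.cons_val]
  linear_combination (k ^ 2 - z ^ 2) * (kp k : ℂ) ^ 2 * I_sq

lemma sum_poles (k : ℝ) : ∑ i, poles k i = 0 := by
  simp [Fin.sum_univ_four, poles]

lemma sum_mul_poles (e : Fin 4 → ℂ) (k : ℝ) :
    ∑ i, e i * poles k i = (e 0 - e 1) * k + (e 2 - e 3) * (I * kp k) := by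
  simp only [Fin.sum_univ_four, poles, Matrix.cons_val]
  ring

lemma prod_sub_poles_ne_zero (hz : ∀ i, z ≠ poles k i) : ∏ i, (z - poles k i) ≠ 0 :=
  Finset.prod_ne_zero_iff.2 fun i _ ↦ sub_ne_zero.2 (hz i)

lemma prod_mul_pcoef (hz : ∀ i, z ≠ poles k i) :
    (∏ i, (z - poles k i)) * pcoef k z = z * (1 - 2 * ((k : ℂ) ^ 2 - z ^ 2)) := by
  have hD := prod_sub_poles_ne_zero hz
  rw [prod_sub_poles] at hD ⊢
  rw [pcoef, neg_mul, mul_div_cancel₀ _ (neg_ne_zero.1 hD)]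
  ring

lemma prod_mul_qGt (hω : ω ≠ 0) (hz : ∀ i, z ≠ poles k i) :
    (∏ i, (z - poles k i)) * qGt k ω ξ z =
      -(2 * z ^ 2 + 2 / ω * z + ((1 - ξ) / ω ^ 2 - k ^ 2)) := by
  have hω' : (ω : ℂ) ≠ 0 := ofReal_ne_zero.2 hω
  have hD := prod_sub_poles_ne_zero hz
  rw [prod_sub_poles] at hD ⊢
  rw [qGt, mul_assoc, neg_mul, mul_div_assoc', mul_comm (((k : ℂ) ^ 2 - z ^ 2) * _),
    mul_div_mul_right _ _ (neg_ne_zero.1 hD)]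
  field_simp
  ring

lemma pcoef_eq_poleSum (hk : k ^ 2 ≤ 1) (hz : ∀ i, z ≠ poles k i) :
    pcoef k z = 2 * poleSum (fun _ ↦ 1 / 4) (poles k) z := by
  refine mul_left_cancel₀ (prod_sub_poles_ne_zero hz) ?_
  have h0 := sub_ne_zero.2 (hz 0)
  have h1 := sub_ne_zero.2 (hz 1)
  have h2 := sub_ne_zero.2 (hz 2)
  have h3 := sub_ne_zero.2 (hz 3)
  rw [prod_mul_pcoef hz]
  simp only [poleSum, Fin.prod_univ_four, Fin.sum_univ_four]
  field_simp
  simp only [poles, Matrix.cons_val]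
  linear_combination (-4 * z) * ofReal_kp_sq hk + (4 * z * kp k ^ 2) * I_sq

lemma isOpen_ne_poles (k : ℝ) : IsOpen {z | ∀ i, z ≠ poles k i} := by
  simp only [Set.ofPred_forall]
  exact isOpen_iInter_of_finite fun i ↦ isOpen_ne

lemma deriv_pcoef_div_two_add_sq_div_four (hk : k ^ 2 ≤ 1) (hz : ∀ i, z ≠ poles k i) :
    deriv (pcoef k) z / 2 + pcoef k z ^ 2 / 4 =
      deriv (poleSum (fun _ ↦ 1 / 4) (poles k)) z + poleSum (fun _ ↦ 1 / 4) (poles k) z ^ 2 := by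
  have pcoef_eventuallyEq : pcoef k =ᶠ[nhds z] fun y ↦ 2 * poleSum (fun _ ↦ 1 / 4) (poles k) y :=
    Filter.eventually_of_mem ((isOpen_ne_poles k).mem_nhds hz) fun _ ↦ pcoef_eq_poleSum hk
  rw [pcoef_eventuallyEq.deriv_eq, pcoef_eq_poleSum hk hz,
    deriv_const_mul _ (hasDerivAt_poleSum _ hz).differentiableAt]
  ring

lemma deriv_poleSum_add_sq_sub_rGt (hk : k ^ 2 ≤ 1) {e : Fin 4 → ℂ}
    (he : ∀ i, e i = 1 / 4 ∨ e i = 3 / 4) (hz : ∀ i, z ≠ poles k i) :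
    deriv (poleSum e (poles k)) z + poleSum e (poles k) z ^ 2 - rGt k ω ξ z =
      qGt k ω ξ z + ∑ x ∈ Finset.univ.offDiag,
        (e x.1 * e x.2 - 1 / 4 * (1 / 4)) / ((z - poles k x.1) * (z - poles k x.2)) := by
  rw [rGt, add_assoc, deriv_pcoef_div_two_add_sq_div_four hk hz,
    ← deriv_poleSum_add_sq_sub (f := fun _ ↦ 1 / 4)
      (fun i ↦ sq_sub_self_of_eq_quarter_or (he i)) hz]
  ring

lemma exists_prod_mul_deriv_poleSum_add_sq_sub_rGt (hk : k ^ 2 ≤ 1) (hω : ω ≠ 0)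
    {e : Fin 4 → ℂ} (he : ∀ i, e i = 1 / 4 ∨ e i = 3 / 4) :
    ∃ c, ∀ z, (∀ i, z ≠ poles k i) →
      (∏ i, (z - poles k i)) *
          (deriv (poleSum e (poles k)) z + poleSum e (poles k) z ^ 2 - rGt k ω ξ z) =
        ((∑ i, e i) * (∑ i, e i - 1) - 2) * z ^ 2
          + 2 * ((∑ i, e i - 1) * ∑ i, e i * poles k i - 1 / ω) * z + c := by
  obtain ⟨c, hc⟩ := exists_prod_mul_sum_offDiag_eq (f := fun _ ↦ 1 / 4)
    (fun i ↦ sq_sub_self_of_eq_quarter_or (he i)) (sum_poles k)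
  have sum_quarter : ∑ _i : Fin 4, (1 / 4 : ℂ) = 1 := by simp
  refine ⟨c - ((1 - ξ) / ω ^ 2 - k ^ 2), fun z hz ↦ ?_⟩
  rw [deriv_poleSum_add_sq_sub_rGt hk he hz, mul_add, prod_mul_qGt hω hz, hc z hz, sum_quarter]
  ring

end Poles

section DegreeZero

variable {k ω ξ : ℝ}

lemma mul_sum_mul_poles_eq_one (hk : k ^ 2 ≤ 1) (hω : ω ≠ 0) {e : Fin 4 → ℂ}
    (he : ∀ i, e i = 1 / 4 ∨ e i = 3 / 4) (hsum : ∑ i, e i = 2)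
    (hres : ∀ z, (∀ i, z ≠ poles k i) →
      kovacicResidual (rGt k ω ξ) (poleSum e (poles k)) 1 z = 0) :
    ω * ∑ i, e i * poles k i = 1 := by
  obtain ⟨c, hc⟩ := exists_prod_mul_deriv_poleSum_add_sq_sub_rGt (ξ := ξ) hk hω he
  have linear_eq_zero : (⟨0, 0, 2 * (∑ i, e i * poles k i - 1 / ω), c⟩ : Cubic ℂ) = 0 := by
    refine cubic_eq_zero_of_eval_eq_zero_off_finite (Set.finite_range (poles k)) fun z hz ↦ ?_
    have hz' : ∀ i, z ≠ poles k i := fun i h ↦ hz ⟨i, h.symm⟩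
    have potential_eq_zero :
        deriv (poleSum e (poles k)) z + poleSum e (poles k) z ^ 2 - rGt k ω ξ z = 0 := by
      simpa [kovacicResidual] using hres z hz'
    have cleared := hc z hz'
    rw [potential_eq_zero, hsum] at cleared
    simp only [Cubic.toPoly, Polynomial.eval_add, Polynomial.eval_mul, Polynomial.eval_C,
      Polynomial.eval_pow, Polynomial.eval_X]
    linear_combination -cleared
  have linear_coeff : 2 * (∑ i, e i * poles k i - 1 / ω) = 0 := congrArg Cubic.c linear_eq_zero
  have hω' : (ω : ℂ) ≠ 0 := ofReal_ne_zero.2 hω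
  linear_combination ω / 2 * linear_coeff + mul_one_div_cancel hω'

lemma mul_sum_mul_poles_ne_one (hk : k ^ 2 < 1) (hω : ω ≠ 0) {e : Fin 4 → ℂ}
    (he : ∀ i, e i = 1 / 4 ∨ e i = 3 / 4) (hsum : ∑ i, e i = 2) :
    ω * ∑ i, e i * poles k i ≠ 1 := by
  have exponent_im (i) : (e i).im = 0 := by rcases he i with h | h <;> simp [h]
  lift e to Fin 4 → ℝ using exponent_im
  replace he (i) : e i = 1 / 4 ∨ e i = 3 / 4 := by simpa [← ofReal_inj] using he i
  beta_reduce at hsum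
  norm_cast at hsum
  intro h
  rw [sum_mul_poles] at h
  have e_two_eq_e_three : e 2 = e 3 := by
    simpa [hω, (kp_pos hk).ne', sub_eq_zero] using congrArg im h
  have re_eq : ω * ((e 0 - e 1) * k) = 1 := by simpa using congrArg re h
  have pair_sum : e 0 + e 1 = 1 / 2 ∨ e 0 + e 1 = 3 / 2 := by
    rw [Fin.sum_univ_four] at hsum
    rcases he 2 with h2 | h2
    · right; linarith
    · left; linarith
  have e_zero_eq_e_one : e 0 = e 1 := by
    rcases he 0 with h0 | h0 <;> rcases he 1 with h1 | h1 <;> rcases pair_sum with h | h <;>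
      linarith
  simp [e_zero_eq_e_one] at re_eq

end DegreeZero

section DegreeOne

open Polynomial

variable {k ω ξ : ℝ} {z : ℂ}

lemma kovacicResidual_rGt_quarter (hk : k ^ 2 ≤ 1) (hz : ∀ i, z ≠ poles k i) (P : ℂ[X]) :
    kovacicResidual (rGt k ω ξ) (poleSum (fun _ ↦ 1 / 4) (poles k)) P z =
      (derivative (derivative P)).eval z + pcoef k z * (derivative P).eval z
        + qGt k ω ξ z * P.eval z := by
  rw [kovacicResidual, deriv_poleSum_add_sq_sub_rGt hk (fun _ ↦ Or.inl rfl) hz,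
    pcoef_eq_poleSum hk hz]
  simp

lemma prod_mul_kovacicResidual_X_add_C (hk : k ^ 2 ≤ 1) (hω : ω ≠ 0)
    (hz : ∀ i, z ≠ poles k i) (c : ℂ) :
    (∏ i, (z - poles k i)) *
        kovacicResidual (rGt k ω ξ) (poleSum (fun _ ↦ 1 / 4) (poles k)) (X + C c) z =
      -(2 * (c + 1 / ω) * z ^ 2
        + (2 * k ^ 2 - 1 + 2 * c / ω + ((1 - ξ) / ω ^ 2 - k ^ 2)) * z
        + ((1 - ξ) / ω ^ 2 - k ^ 2) * c) := by
  have residual : kovacicResidual (rGt k ω ξ) (poleSum (fun _ ↦ 1 / 4) (poles k)) (X + C c) z =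
      pcoef k z + qGt k ω ξ z * (z + c) := by
    rw [kovacicResidual_rGt_quarter hk hz]
    simp
  rw [residual, mul_add, ← mul_assoc, prod_mul_pcoef hz, prod_mul_qGt hω hz]
  ring

lemma kovacicResidual_X_add_C_eq_zero_iff_coeff (hk : k ^ 2 ≤ 1) (hω : ω ≠ 0) (c : ℂ) :
    (∀ z, (∀ i, z ≠ poles k i) →
      kovacicResidual (rGt k ω ξ) (poleSum (fun _ ↦ 1 / 4) (poles k)) (X + C c) z = 0) ↔
    2 * (c + 1 / ω) = 0 ∧ 2 * k ^ 2 - 1 + 2 * c / ω + ((1 - ξ) / ω ^ 2 - k ^ 2) = 0 ∧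
      ((1 - ξ) / ω ^ 2 - k ^ 2) * c = 0 := by
  constructor
  · intro hres
    have cubic_eq_zero : (⟨0, 2 * (c + 1 / ω),
        2 * k ^ 2 - 1 + 2 * c / ω + ((1 - ξ) / ω ^ 2 - k ^ 2),
        ((1 - ξ) / ω ^ 2 - k ^ 2) * c⟩ : Cubic ℂ) = 0 := by
      refine cubic_eq_zero_of_eval_eq_zero_off_finite (Set.finite_range (poles k)) fun z hz ↦ ?_
      have hz' : ∀ i, z ≠ poles k i := fun i h ↦ hz ⟨i, h.symm⟩
      have cleared := prod_mul_kovacicResidual_X_add_C (ξ := ξ) hk hω hz' c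
      rw [hres z hz'] at cleared
      simp only [Cubic.toPoly, eval_add, eval_mul, eval_C, eval_pow, eval_X]
      linear_combination cleared
    exact ⟨congrArg Cubic.b cubic_eq_zero, congrArg Cubic.c cubic_eq_zero,
      congrArg Cubic.d cubic_eq_zero⟩
  · rintro ⟨quadratic_coeff, linear_coeff, constant_coeff⟩ z hz
    refine (mul_eq_zero.1 ?_).resolve_left (prod_sub_poles_ne_zero hz)
    rw [prod_mul_kovacicResidual_X_add_C hk hω hz, quadratic_coeff, linear_coeff, constant_coeff]
    simp

lemma kovacicResidual_X_add_C_eq_zero_iff (hk : k ^ 2 ≤ 1) (hω : ω ≠ 0) (c : ℂ) :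
    (∀ z, (∀ i, z ≠ poles k i) →
      kovacicResidual (rGt k ω ξ) (poleSum (fun _ ↦ 1 / 4) (poles k)) (X + C c) z = 0) ↔
    c = -1 / ω ∧ 1 - ξ = ω ^ 2 * k ^ 2 ∧ ω ^ 2 * (2 * k ^ 2 - 1) = 2 := by
  have hω' : (ω : ℂ) ≠ 0 := ofReal_ne_zero.2 hω
  rw [kovacicResidual_X_add_C_eq_zero_iff_coeff hk hω, ← ofReal_inj (z := 1 - ξ),
    ← ofReal_inj (w := 2)]
  push_cast
  constructor
  · rintro ⟨quadratic_coeff, linear_coeff, constant_coeff⟩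
    have hc : c = -1 / ω := by linear_combination quadratic_coeff / 2
    have hc0 : c ≠ 0 := hc ▸ div_ne_zero (neg_ne_zero.2 one_ne_zero) hω'
    have h0 := (mul_eq_zero.1 constant_coeff).resolve_right hc0
    rw [h0, hc] at linear_coeff
    field_simp at h0 linear_coeff
    exact ⟨hc, by linear_combination h0, by linear_combination linear_coeff⟩
  · rintro ⟨rfl, hξ, hω2⟩
    rw [hξ]
    refine ⟨by ring, ?_, by field_simp; ring⟩
    field_simp
    linear_combination hω2

end DegreeOne

lemma parameter_equations_iff {K : Type*} [Field K] [LinearOrder K] [IsStrictOrderedRing K]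
    {k ω ξ : K} :
    (1 - ξ = ω ^ 2 * k ^ 2 ∧ ω ^ 2 * (2 * k ^ 2 - 1) = 2) ↔
      (0 < 2 * k ^ 2 - 1 ∧ ξ = -1 / (2 * k ^ 2 - 1) ∧ ω ^ 2 = 2 / (2 * k ^ 2 - 1)) := by
  constructor
  · rintro ⟨hξ, hω⟩
    have hk : 0 < 2 * k ^ 2 - 1 := pos_of_mul_pos_right (hω.symm ▸ two_pos) (sq_nonneg ω)
    refine ⟨hk, ?_, (eq_div_iff hk.ne').2 hω⟩
    rw [eq_div_iff hk.ne']
    linear_combination -(2 * k ^ 2 - 1) * hξ - k ^ 2 * hω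
  · rintro ⟨hk, hξ, hω⟩
    rw [hξ, hω]
    constructor <;> field_simp
    ring

lemma degree_eq_zero_or_one_of_exponents {einf : ℂ} {e : Fin 4 → ℂ} {d : ℕ}
    (hinf : einf = -1 ∨ einf = 2) (he : ∀ i, e i = 1 / 4 ∨ e i = 3 / 4)
    (hd : (d : ℂ) = 1 - (einf + ∑ i, e i)) :
    (d = 0 ∧ ∑ i, e i = 2) ∨ (d = 1 ∧ e = fun _ ↦ 1 / 4) := by
  have exists_nat (i) : ∃ m : ℕ, e i = 1 / 4 + m / 2 := by
    rcases he i with h | h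
    · exact ⟨0, by simp [h]⟩
    · exact ⟨1, by rw [h]; norm_num⟩
  choose m hm using exists_nat
  have sum_eq : ∑ i, e i = 1 + (∑ i, m i : ℕ) / 2 := by
    simp [hm, Finset.sum_add_distrib, Finset.sum_div]
  rcases hinf with rfl | rfl
  · have degree_eq : 2 * d + ∑ i, m i = 2 := by
      rw [sum_eq] at hd
      have : (2 * d + (∑ i, m i : ℕ) : ℂ) = 2 := by linear_combination 2 * hd
      exact_mod_cast this
    obtain rfl | rfl : d = 0 ∨ d = 1 := by omega
    · left
      rw [sum_eq, show ∑ i, m i = 2 by omega]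
      norm_num
    · right
      have m_eq_zero : ∀ i, m i = 0 := by simpa using degree_eq
      exact ⟨rfl, funext fun i ↦ by simp [hm, m_eq_zero]⟩
  · rw [sum_eq] at hd
    have : (2 * d + (∑ i, m i : ℕ) + 4 : ℂ) = 0 := by linear_combination 2 * hd
    norm_cast at this

/-- case `C > 1`: the first case of the Kovacic algorithm succeeds
(there are exponents `e_∞ ∈ {−1,2}`, `eᵢ ∈ {1/4,3/4}` with
`d = 1 − (e_∞ + Σeᵢ) ∈ ℕ₀` and a monic polynomial `P` of degree `d` with
`P'' + 2wP' + (w' + w² − r)P = 0`, `w = Σ eᵢ/(z−zᵢ)`) if and only if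
`2k² − 1 > 0`, `ξ = −1/(2k²−1)` and `ω² = 2/(2k²−1)`. -/
theorem kovacic_case_one_Cgt (k ω ξ : ℝ)
    (hk0 : 0 < k) (hk1 : k < 1) (hω : 0 < ω) :
    (∃ (einf : ℂ) (e : Fin 4 → ℂ) (d : ℕ) (P : Polynomial ℂ),
        (einf = -1 ∨ einf = 2) ∧ (∀ i, e i = 1 / 4 ∨ e i = 3 / 4) ∧
        (d : ℂ) = 1 - (einf + ∑ i, e i) ∧
        P.Monic ∧ P.natDegree = d ∧
        (∀ z : ℂ, (∀ i, z ≠ poles k i) →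
          (P.derivative.derivative.eval z)
            + 2 * (∑ i, e i / (z - poles k i)) * (P.derivative.eval z)
            + (deriv (fun z => ∑ i, e i / (z - poles k i)) z
                + (∑ i, e i / (z - poles k i)) ^ 2 - rGt k ω ξ z) * P.eval z
            = 0))
      ↔ (0 < 2 * k ^ 2 - 1 ∧ ξ = -1 / (2 * k ^ 2 - 1) ∧
          ω ^ 2 = 2 / (2 * k ^ 2 - 1)) := by
  have hk : k ^ 2 < 1 := by nlinarith
  rw [← parameter_equations_iff]
  constructor
  · rintro ⟨einf, e, d, P, hinf, he, hd, hP, hdeg, hres⟩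
    rcases degree_eq_zero_or_one_of_exponents hinf he hd with ⟨rfl, hsum⟩ | ⟨rfl, rfl⟩
    · obtain rfl := hP.natDegree_eq_zero.1 hdeg
      exact absurd (mul_sum_mul_poles_eq_one hk.le hω.ne' he hsum hres)
        (mul_sum_mul_poles_ne_one hk hω.ne' he hsum)
    · rw [hP.eq_X_add_C hdeg] at hres
      exact ((kovacicResidual_X_add_C_eq_zero_iff hk.le hω.ne' _).1 hres).2
  · intro h
    refine ⟨-1, fun _ ↦ 1 / 4, 1, Polynomial.X + Polynomial.C (-1 / (ω : ℂ)),
      .inl rfl, fun _ ↦ .inl rfl, by simp,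
      Polynomial.monic_X_add_C _, Polynomial.natDegree_X_add_C _, ?_⟩
    exact (kovacicResidual_X_add_C_eq_zero_iff hk.le hω.ne' _).2 ⟨rfl, h⟩
end
end
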